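/- Concavity of quantum weighted entropy: let ρ^(1),…,ρ^(r) be density matrices on H_A, b = (b₁,…,b_r) a probability vector, and φ a positive semidefinite weight. Then S_φ(Σ_l b_l ρ^(l)) ≥ Σ_l b_l S_φ(ρ^(l)). -/

import Mathlib

/-!
The statement reduces to the operator convexity of `x ↦ x log x` on positive semidefinite matrices:
if `D = Σ b_l f(ρ_l) - f(Σ b_l ρ_l)` is positive semidefinite for `f x = x log x`, then
`tr (φ D) ≥ 0` for every positive semidefinite `φ`, which is the claimed inequality.

For operator convexity, first let `1 < p < 2`. Then `x ^ p` is an integral, against a positive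
measure in `t > 0`, of the functions `t ^ (p - 1) * (t⁻¹ * x + t * (t + x)⁻¹ - 1)`. These are affine
plus a positive multiple of the operator convex function `(t + x)⁻¹`, so `a ↦ a ^ p` is operator
convex (`convexOn_nnrpow_Ioo_one_two`). Consequently `q⁻¹ (a ^ (1 + q) - a)` is operator convex for
`0 < q < 1`, and letting `q → 0⁺` gives the operator convexity of `a log a`
(`convexOn_cfc_mul_log`), since `q⁻¹ (x ^ (1 + q) - x) = x · q⁻¹ (x ^ q - 1) → x log x`.
-/

open Matrix BigOperators ComplexOrder Kronecker

/-- Functional calculus for Hermitian matrices: `matFun f A = Σ f(λᵢ) |eᵢ⟩⟨eᵢ|`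
(defined to be `0` if `A` is not Hermitian). -/
noncomputable def matFun {n : Type*} [Fintype n] [DecidableEq n]
    (f : ℝ → ℝ) (A : Matrix n n ℂ) : Matrix n n ℂ :=
  if hA : A.IsHermitian then
    (Matrix.IsHermitian.eigenvectorUnitary hA : Matrix n n ℂ) *
      Matrix.diagonal (fun i => (f (hA.eigenvalues i) : ℂ)) *
      star (Matrix.IsHermitian.eigenvectorUnitary hA : Matrix n n ℂ)
  else 0

/-- Matrix logarithm via functional calculus. -/
noncomputable def matLog {n : Type*} [Fintype n] [DecidableEq n]
    (A : Matrix n n ℂ) : Matrix n n ℂ := matFun Real.log A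

/-- Quantum weighted entropy `S_φ(ρ) = -tr (φ ρ log ρ)`, where `ρ log ρ` is defined by
functional calculus with the convention `0 log 0 = 0` (note `Real.log 0 = 0`). -/
noncomputable def wEnt {n : Type*} [Fintype n] [DecidableEq n]
    (φ ρ : Matrix n n ℂ) : ℂ :=
  -(φ * matFun (fun x => x * Real.log x) ρ).trace

section OperatorConvexity

open Set MeasureTheory CFC Real Filter Topology
open scoped NNReal

section CStar

variable {A : Type*} [CStarAlgebra A] [PartialOrder A] [StarOrderedRing A]

lemma convexOn_cfc_rpowIntegrand₁₂ {p t : ℝ} (ht : 0 < t) :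
    ConvexOn ℝ (Ici (0 : A)) (cfc (rpowIntegrand₁₂ p t)) := by
  have h₁ : (Ici (0 : A)).EqOn (cfc (rpowIntegrand₁₂ p t))
      (fun x : A => t ^ (p - 1) • (t⁻¹ • x + t • Ring.inverse (algebraMap ℝ A t + x)
        - algebraMap ℝ A 1)) := by
    intro x hx
    have hg : ContinuousOn (fun z : ℝ => (t + z)⁻¹) (spectrum ℝ x) := by
      fun_prop (disch := grind -abstractProof)
    have hspectrum : ∀ r ∈ spectrum ℝ x, t + r ≠ 0 := by grind
    have hxs : IsSelfAdjoint x := IsSelfAdjoint.of_nonneg hx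
    have e : rpowIntegrand₁₂ p t =
        fun z : ℝ => t ^ (p - 1) * (t⁻¹ * z + t * (t + z)⁻¹ - 1) := rfl
    have hu : ContinuousOn (fun z : ℝ => t * (t + z)⁻¹) (spectrum ℝ x) := hg.const_mul t
    have hv : ContinuousOn (fun z : ℝ => t⁻¹ * z) (spectrum ℝ x) := by fun_prop
    have hw : ContinuousOn (fun z : ℝ => t + z) (spectrum ℝ x) := by fun_prop
    have huv : ContinuousOn (fun z : ℝ => t⁻¹ * z + t * (t + z)⁻¹) (spectrum ℝ x) := hv.add hu
    rw [e, cfc_const_mul _ (fun z : ℝ => t⁻¹ * z + t * (t + z)⁻¹ - 1) x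
        (huv.sub continuousOn_const),
      cfc_sub (fun z : ℝ => t⁻¹ * z + t * (t + z)⁻¹) (fun _ => 1) x huv continuousOn_const,
      cfc_add (a := x) (fun z : ℝ => t⁻¹ * z) (fun z : ℝ => t * (t + z)⁻¹) hv hu,
      cfc_const 1 x hxs, cfc_const_mul _ (fun z : ℝ => z) x (continuousOn_id' _),
      cfc_const_mul _ _ x hg,
      cfc_inv _ _ hspectrum hw hxs, cfc_const_add _ (fun z : ℝ => z) x (continuousOn_id' _) hxs,
      cfc_id' ℝ x hxs]
  refine ConvexOn.congr ?_ h₁.symm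
  refine ConvexOn.smul (by positivity) ?_
  refine ConvexOn.sub ?_ (concaveOn_const _ (convex_Ici 0))
  refine ConvexOn.add ?_
    (ConvexOn.smul ht.le <| CStarAlgebra.convexOn_ringInverse_algebraMap_add ht)
  exact ConvexOn.smul (by positivity) (convexOn_id (convex_Ici 0))

/-- `a ↦ a ^ p` is operator convex for `1 < p < 2`. -/
lemma convexOn_nnrpow_Ioo_one_two {p : ℝ≥0} (hp : p ∈ Ioo 1 2) :
    ConvexOn ℝ (Ici (0 : A)) (fun a : A => a ^ p) := by
  obtain ⟨μ, hμ⟩ := CFC.exists_measure_nnrpow_eq_integral_cfcₙ_rpowIntegrand₁₂ A hp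
  have h₃' : (Ici 0).EqOn (fun a : A => a ^ p)
      (fun a : A => ∫ t in Ioi 0, cfcₙ (rpowIntegrand₁₂ p t) a ∂μ) :=
    fun a ha => (hμ a ha).2
  refine ConvexOn.congr ?_ h₃'.symm
  refine integral_convexOn_of_integrand_ae (convex_Ici _) ?_ fun a ha => (hμ a ha).1
  filter_upwards [ae_restrict_mem measurableSet_Ioi] with t ht
  refine ConvexOn.congr (convexOn_cfc_rpowIntegrand₁₂ (p := p) ht) fun a ha => ?_
  have hc : ContinuousOn (rpowIntegrand₁₂ p t) (quasispectrum ℝ a) :=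
    (continuousOn_rpowIntegrand₁₂_uncurry (p := p) (by exact_mod_cast hp.1) _
      (fun x hx => quasispectrum_nonneg_of_nonneg a ha x hx)).uncurry_left _ ht
  exact (cfcₙ_eq_cfc hc (rpowIntegrand₁₂_zero ht)).symm

lemma convexOn_cfc_rpow_sub_self {q : ℝ} (hq : q ∈ Ioo 0 1) :
    ConvexOn ℝ (Ici (0 : A)) (cfc (fun x : ℝ => q⁻¹ * (x ^ (1 + q) - x))) := by
  obtain ⟨hq0, hq1⟩ := hq
  lift q to ℝ≥0 using hq0.le
  have hp : 1 + q ∈ Ioo (1 : ℝ≥0) 2 := by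
    constructor
    · exact lt_add_of_pos_right _ (by exact_mod_cast hq0)
    · rw [← one_add_one_eq_two]; gcongr; exact_mod_cast hq1
  have h : (Ici (0 : A)).EqOn (cfc (fun x : ℝ => (q : ℝ)⁻¹ * (x ^ (1 + (q : ℝ)) - x)))
      (fun a : A => (q : ℝ)⁻¹ • (a ^ (1 + q) - a)) := by
    intro a ha
    have ha' : 0 ≤ a := ha
    have hc : ContinuousOn (fun x : ℝ => x ^ (1 + (q : ℝ))) (spectrum ℝ a) :=
      (Real.continuous_rpow_const (by positivity)).continuousOn
    rw [cfc_const_mul .., cfc_sub (a := a) (fun x : ℝ => x ^ (1 + (q : ℝ))) (fun x => x),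
      cfc_id' ..]
    dsimp only
    rw [nnrpow_eq_rpow (zero_lt_one.trans hp.1), rpow_eq_cfc_real ha']
    simp
  refine ConvexOn.congr ?_ h.symm
  refine ConvexOn.smul (by positivity) ?_
  exact ConvexOn.sub (convexOn_nnrpow_Ioo_one_two hp) (concaveOn_id (convex_Ici 0))

end CStar

lemma tendsto_rpow_sub_self_mul_log {x : ℝ} (hx : 0 ≤ x) :
    Tendsto (fun q : ℝ => q⁻¹ * (x ^ (1 + q) - x)) (𝓝[>] 0) (𝓝 (x * Real.log x)) := by
  obtain rfl | hx := hx.eq_or_lt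
  · refine Tendsto.congr' ?_ (by simpa using tendsto_const_nhds)
    filter_upwards [self_mem_nhdsWithin] with q hq
    have hq : 0 < q := hq
    simp [Real.zero_rpow (by positivity : 1 + q ≠ 0)]
  · refine ((tendsto_rpow_sub_one_log hx).const_mul x).congr fun q => ?_
    rw [Real.rpow_add hx, Real.rpow_one]
    ring

section Mat

open scoped MatrixOrder Matrix.Norms.L2Operator

variable {n : Type*} [Fintype n] [DecidableEq n]

lemma convexOn_cfc_mul_log :
    ConvexOn ℝ (Ici (0 : Matrix n n ℂ)) (cfc (fun x : ℝ => x * Real.log x)) := by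
  -- Spectra of matrices are finite, so pointwise convergence is uniform on them.
  have key : ∀ a : Matrix n n ℂ, 0 ≤ a →
      Tendsto (fun q : ℝ => cfc (fun x : ℝ => q⁻¹ * (x ^ (1 + q) - x)) a) (𝓝[>] 0)
        (𝓝 (cfc (fun x : ℝ => x * Real.log x) a)) := by
    intro a ha
    have hfin : (spectrum ℝ a).Finite := Matrix.finite_real_spectrum
    refine tendsto_cfc_fun ?_ (.of_forall fun q => hfin.continuousOn _)
    intro u hu
    rw [Filter.eventually_all_finite hfin]
    intro x hx
    exact (tendsto_rpow_sub_self_mul_log (spectrum_nonneg_of_nonneg ha hx)).eventually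
      (mem_nhds_left _ hu)
  refine ⟨convex_Ici 0, fun x hx y hy s t hs ht hst => ?_⟩
  refine le_of_tendsto_of_tendsto (key _ (convex_Ici 0 hx hy hs ht hst))
    (((key x hx).const_smul s).add ((key y hy).const_smul t)) ?_
  have h₁ : ∀ᶠ q : ℝ in 𝓝[>] 0, q ∈ Ioo (0 : ℝ) 1 := Ioo_mem_nhdsGT one_pos
  filter_upwards [h₁] with q hq
  exact (convexOn_cfc_rpow_sub_self hq).2 hx hy hs ht hst

lemma matFun_eq_cfc (f : ℝ → ℝ) {a : Matrix n n ℂ} (ha : a.IsHermitian) :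
    matFun f a = cfc f a := by
  rw [ha.cfc_eq, matFun, dif_pos ha, IsHermitian.cfc, Unitary.conjStarAlgAut_apply]
  rfl

/-- The finite Jensen inequality for `x log x`, in the Loewner order. -/
lemma posSemidef_sum_matFun_sub {ι : Type*} [Fintype ι] (ρs : ι → Matrix n n ℂ)
    (hρs : ∀ l, (ρs l).PosSemidef) (b : ι → ℝ) (hb : ∀ l, 0 ≤ b l) (hb1 : ∑ l, b l = 1) :
    (∑ l, (b l : ℂ) • matFun (fun x => x * Real.log x) (ρs l)
      - matFun (fun x => x * Real.log x) (∑ l, (b l : ℂ) • ρs l)).PosSemidef := by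
  have hs : (∑ l, (b l : ℂ) • ρs l).PosSemidef :=
    Matrix.posSemidef_sum _ fun l _ => (hρs l).smul (by exact_mod_cast hb l)
  simp_rw [matFun_eq_cfc _ hs.1, fun l => matFun_eq_cfc (fun x => x * Real.log x) (hρs l).1]
  rw [← Matrix.le_iff]
  have := (convexOn_cfc_mul_log (n := n)).map_sum_le (t := Finset.univ) (w := b) (p := ρs)
    (fun l _ => hb l) hb1 (fun l _ => (hρs l).nonneg)
  simpa only [Complex.coe_smul] using this

end Mat

end OperatorConvexity

open scoped MatrixOrder Matrix.Norms.L2Operator in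
lemma trace_mul_nonneg_of_posSemidef {n : Type*} [Fintype n] [DecidableEq n]
    {φ D : Matrix n n ℂ} (hφ : φ.PosSemidef) (hD : D.PosSemidef) : 0 ≤ (φ * D).trace := by
  obtain ⟨B, rfl⟩ := CStarAlgebra.nonneg_iff_eq_star_mul_self.mp hφ.nonneg
  rw [Matrix.mul_assoc, Matrix.trace_mul_comm]
  exact (hD.mul_mul_conjTranspose_same B).trace_nonneg

/-- Concavity of quantum weighted entropy: for density matrices `ρ^(1),…,ρ^(r)`, a
probability vector `b`, and a positive semidefinite weight `φ`,
`S_φ(Σ_l b_l ρ^(l)) ≥ Σ_l b_l S_φ(ρ^(l))`. -/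
theorem wEnt_concavity {n : Type*} [Fintype n] [DecidableEq n] (r : ℕ)
    (ρs : Fin r → Matrix n n ℂ) (hρs : ∀ l, (ρs l).PosSemidef)
    (hρs1 : ∀ l, (ρs l).trace = 1)
    (b : Fin r → ℝ) (hb : ∀ l, 0 ≤ b l) (hb1 : ∑ l, b l = 1)
    (φ : Matrix n n ℂ) (hφ : φ.PosSemidef) :
    wEnt φ (∑ l, (b l : ℂ) • ρs l) ≥ ∑ l, (b l : ℂ) * wEnt φ (ρs l) := by
  have h := trace_mul_nonneg_of_posSemidef hφ (posSemidef_sum_matFun_sub ρs hρs b hb hb1)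
  rw [Matrix.mul_sub, Matrix.trace_sub, Matrix.mul_sum, Matrix.trace_sum] at h
  simp only [Matrix.mul_smul, Matrix.trace_smul, smul_eq_mul] at h
  simp only [wEnt, mul_neg, Finset.sum_neg_distrib, ge_iff_le, neg_le_neg_iff]
  exact sub_nonneg.mp h
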